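/- Let Γ be a group and let ρ₁, ρ₂ : Γ → PSL(2,ℝ) be group homomorphisms. Assume that ρ₁(Γ) is non-elementary and not discrete, and that rot(ρ₁(γ)) = rot(ρ₂(γ)) for every γ ∈ Γ. Then |tr(ρ₁(γ))| = |tr(ρ₂(γ))| for every γ ∈ Γ. -/

import Mathlib

/-!
`PSL2R` is `PSL(2,ℝ) = SL(2,ℝ)/{±1}`, realized as the quotient of `SL(2,ℝ)` by its center.
-/

open Matrix Real

noncomputable section

/-- `SL(2,ℝ)`. -/
abbrev SL2R := Matrix.SpecialLinearGroup (Fin 2) ℝ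

/-- The topology on `SL(2,ℝ)` induced from the space of matrices. -/
instance : TopologicalSpace SL2R :=
  TopologicalSpace.induced (fun g => (g : Matrix (Fin 2) (Fin 2) ℝ)) inferInstance

/-- `PSL(2,ℝ) = SL(2,ℝ)/{±1}`, the quotient of `SL(2,ℝ)` by its center. -/
abbrev PSL2R := SL2R ⧸ Subgroup.center SL2R

/-- The rotation matrix `R(θ) = [[cos θ, sin θ], [-sin θ, cos θ]]`, as an element of `SL(2,ℝ)`. -/
def rotMat (θ : ℝ) : SL2R :=
  ⟨!![Real.cos θ, Real.sin θ; -Real.sin θ, Real.cos θ], by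
    simp [Matrix.det_fin_two_of]
    ring_nf
    nlinarith [Real.sin_sq_add_cos_sq θ]⟩

/-- The absolute value of the trace, well defined on `PSL(2,ℝ)`. -/
def absTrace (A : PSL2R) : ℝ :=
  |Matrix.trace ((Quotient.out A : SL2R) : Matrix (Fin 2) (Fin 2) ℝ)|

/-- An element of `PSL(2,ℝ)` is elliptic if `|tr| < 2`. -/
def IsElliptic (A : PSL2R) : Prop := absTrace A < 2

/-- The rotation number of an element of `PSL(2,ℝ)`, in `ℝ/2πℤ`: it is `2θ` if the
element is conjugate to the class of `R(θ)` with `θ ∈ (0,π)` (i.e. elliptic), and `0`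
otherwise (hyperbolic, parabolic, identity). -/
def rot (A : PSL2R) : AddCircle (2 * π) :=
  open Classical in
  if h : ∃ θ ∈ Set.Ioo (0:ℝ) π, IsConj (QuotientGroup.mk (rotMat θ) : PSL2R) A then
    ((2 * h.choose : ℝ) : AddCircle (2 * π))
  else 0

/-- A subgroup of `PSL(2,ℝ)` is discrete if it is a discrete subset of the
topological group `PSL(2,ℝ)`. -/
def IsDiscreteSubgroup (G : Subgroup PSL2R) : Prop := DiscreteTopology G

/-- The boundary circle `∂ℍ² = ℝ ∪ {∞}`, realized as the real projective line. -/
def Boundary := Projectivization ℝ (Fin 2 → ℝ)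

/-- An element of `SL(2,ℝ)`, viewed as an invertible matrix. -/
def slInvertible (g : SL2R) : Invertible (g : Matrix (Fin 2) (Fin 2) ℝ) :=
  haveI : Invertible (g : Matrix (Fin 2) (Fin 2) ℝ).det := by rw [g.prop]; exact invertibleOne
  Matrix.invertibleOfDetInvertible _

/-- The (Möbius) action of `SL(2,ℝ)` on the boundary circle `∂ℍ² = ℝP¹`. -/
def boundaryAct (g : SL2R) (p : Boundary) : Boundary :=
  Projectivization.map
    ((Matrix.toLinearEquiv' (g : Matrix (Fin 2) (Fin 2) ℝ) (slInvertible g)) :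
      (Fin 2 → ℝ) →ₗ[ℝ] (Fin 2 → ℝ))
    (Matrix.toLinearEquiv' (g : Matrix (Fin 2) (Fin 2) ℝ) (slInvertible g)).injective p

/-- A subgroup of `PSL(2,ℝ)` is elementary if it has a finite orbit in `ℍ² ∪ ∂ℍ²`:
either the orbit of some point of the hyperbolic plane `ℍ²` is finite, or the orbit of some
point of the boundary circle `∂ℍ²` is finite. (The action of a class in `PSL(2,ℝ)` is
computed via representatives in `SL(2,ℝ)`; the center acts trivially.) -/
def IsElementary (G : Subgroup PSL2R) : Prop :=
  (∃ z : UpperHalfPlane,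
    Set.Finite {w : UpperHalfPlane | ∃ g : SL2R, (QuotientGroup.mk g : PSL2R) ∈ G ∧ g • z = w}) ∨
  (∃ p : Boundary,
    Set.Finite {q : Boundary | ∃ g : SL2R, (QuotientGroup.mk g : PSL2R) ∈ G ∧ boundaryAct g p = q})

end

/-!
A non-elementary, non-discrete subgroup `G` of `PSL(2,ℝ)` is dense. Indeed the closure of its lift
to `SL(2,ℝ)` contains a one-parameter group `exp (t X)` with `X ≠ 0`. The linear span of the scalars
and of all generators of one-parameter groups in that closure is stable under conjugation, hence is
the space of all matrices: otherwise some non-scalar matrix would commute with its conjugates under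
`G`, and `G` would permute its finitely many eigenlines or fix its fixed point in the upper half
plane. So the closure, extended by scalars, is open, and `SL(2,ℝ)` is connected.

On the nonempty open set of elliptic elements the rotation number determines the conjugacy class,
hence `|tr|`. Now `|tr|²` is the character of the tensor square of the tautological representation,
so equality of `|tr|` is a linear relation between the matrix coefficients of `ρ₁ ⊗ ρ₁` and
`ρ₂ ⊗ ρ₂`. A linear relation between the coefficients of a representation of `Γ` that holds on the
preimage of a nonempty open set under `ρ₁` holds on all of `Γ`, because the preimage of any
neighbourhood of the identity under a homomorphism with dense range into a connected group generates
`Γ`.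
-/

open Filter Topology

noncomputable section OneParameterSubgroups

variable {𝔸 : Type*} [NormedRing 𝔸] [NormedAlgebra ℝ 𝔸]

theorem exp_smul_one (μ : ℝ) : NormedSpace.exp (μ • (1 : 𝔸)) = Real.exp μ • (1 : 𝔸) := by
  let := NormedAlgebra.restrictScalars ℚ ℝ 𝔸
  rw [← Algebra.algebraMap_eq_smul_one, ← NormedSpace.algebraMap_exp_comm, ← Real.exp_eq_exp_ℝ,
    Algebra.algebraMap_eq_smul_one]

variable [CompleteSpace 𝔸]

/-- The exponential of a real Banach algebra, valued in the group of units, so that one can ask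
whether `exp X` lies in a subgroup of units. -/
def expUnit (X : 𝔸) : 𝔸ˣ :=
  letI := NormedAlgebra.restrictScalars ℚ ℝ 𝔸
  { val := NormedSpace.exp X
    inv := NormedSpace.exp (-X)
    val_inv := by
      rw [← NormedSpace.exp_add_of_commute (Commute.refl X).neg_right, add_neg_cancel,
        NormedSpace.exp_zero]
    inv_val := by
      rw [← NormedSpace.exp_add_of_commute (Commute.refl X).neg_left, neg_add_cancel,
        NormedSpace.exp_zero] }

/-- The Lie algebra of a group `K` of units, as a set: the velocities of the one-parameter
subgroups `t ↦ exp (t X)` contained in `K`. -/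
def infinitesimalGenerators (K : Subgroup 𝔸ˣ) : Set 𝔸 :=
  {X | ∀ t : ℝ, expUnit (t • X) ∈ K}

@[simp]
theorem val_expUnit (X : 𝔸) : (expUnit X : 𝔸) = NormedSpace.exp X := rfl

@[simp]
theorem expUnit_zero : expUnit (0 : 𝔸) = 1 := Units.ext (by simp)

theorem expUnit_neg (X : 𝔸) : expUnit (-X) = (expUnit X)⁻¹ := by
  ext
  rfl

theorem expUnit_zsmul (k : ℤ) (X : 𝔸) : expUnit (k • X) = expUnit X ^ k := by
  let := NormedAlgebra.restrictScalars ℚ ℝ 𝔸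
  have expUnit_nsmul (n : ℕ) : expUnit (n • X) = expUnit X ^ n :=
    Units.ext (NormedSpace.exp_nsmul n X)
  obtain ⟨n, rfl | rfl⟩ := k.eq_nat_or_neg
  · rw [natCast_zsmul, zpow_natCast, expUnit_nsmul]
  · rw [neg_smul, natCast_zsmul, _root_.zpow_neg, zpow_natCast, expUnit_neg, expUnit_nsmul]

theorem expUnit_conj (u : 𝔸ˣ) (X : 𝔸) : expUnit (u * X * ↑u⁻¹) = u * expUnit X * u⁻¹ := by
  let := NormedAlgebra.restrictScalars ℚ ℝ 𝔸
  exact Units.ext (NormedSpace.exp_units_conj u X)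

theorem continuous_expUnit : Continuous (expUnit : 𝔸 → 𝔸ˣ) := by
  let := NormedAlgebra.restrictScalars ℚ ℝ 𝔸
  exact Units.continuous_iff.2
    ⟨NormedSpace.exp_continuous, NormedSpace.exp_continuous.comp continuous_neg⟩

theorem map_expUnit_nhds_zero : map (expUnit : 𝔸 → 𝔸ˣ) (𝓝 0) = 𝓝 1 := by
  have map_exp : map (NormedSpace.exp : 𝔸 → 𝔸) (𝓝 0) = 𝓝 1 := by
    simpa using (hasStrictFDerivAt_exp_zero (𝕂 := ℝ) (𝔸 := 𝔸)).map_nhds_eq_of_surj (by ext; simp)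
  refine map_injective Units.val_injective ?_
  rw [Units.isOpenEmbedding_val.map_nhds_eq, Units.val_one, ← map_exp, Filter.map_map]
  rfl

theorem conj_mem_infinitesimalGenerators {K : Subgroup 𝔸ˣ} {u : 𝔸ˣ} (hu : u ∈ K) {X : 𝔸}
    (hX : X ∈ infinitesimalGenerators K) : u * X * ↑u⁻¹ ∈ infinitesimalGenerators K := by
  intro t
  rw [← smul_mul_assoc, ← mul_smul_comm, expUnit_conj]
  exact K.mul_mem (K.mul_mem hu (hX t)) (K.inv_mem hu)

theorem conj_mem_span_infinitesimalGenerators {K : Subgroup 𝔸ˣ} {u : 𝔸ˣ} (hu : u ∈ K) {X : 𝔸}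
    (hX : X ∈ Submodule.span ℝ (infinitesimalGenerators K)) :
    u * X * ↑u⁻¹ ∈ Submodule.span ℝ (infinitesimalGenerators K) := by
  refine Submodule.span_le (p := (Submodule.span ℝ (infinitesimalGenerators K)).comap
    (LinearMap.mulLeftRight ℝ (↑u, ↑u⁻¹))) |>.2 (fun Y hY => ?_) hX
  simpa using Submodule.subset_span (conj_mem_infinitesimalGenerators hu hY)

theorem infinitesimalGenerators_mono {K L : Subgroup 𝔸ˣ} (h : K ≤ L) :
    infinitesimalGenerators K ⊆ infinitesimalGenerators L :=
  fun _ hX t => h (hX t)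

theorem one_mem_infinitesimalGenerators_center :
    (1 : 𝔸) ∈ infinitesimalGenerators (Subgroup.center 𝔸ˣ) := by
  refine fun t => Subgroup.mem_center_iff.2 fun u => Units.ext ?_
  rw [Units.val_mul, Units.val_mul, val_expUnit, exp_smul_one, mul_smul_comm, smul_mul_assoc,
    mul_one, one_mul]

theorem mem_infinitesimalGenerators_of_tendsto {K : Subgroup 𝔸ˣ} (hK : IsClosed (K : Set 𝔸ˣ))
    {ι : Type*} {l : Filter ι} [l.NeBot] {r : ι → ℝ} (hr : ∀ i, 0 < r i) (hr0 : Tendsto r l (𝓝 0))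
    {Z : ι → 𝔸} (hZ : ∀ i, expUnit (Z i) ∈ K) {X : 𝔸}
    (hX : Tendsto (fun i => (r i)⁻¹ • Z i) l (𝓝 X)) : X ∈ infinitesimalGenerators K := by
  intro t
  have tendsto_floor : Tendsto (fun i => ⌊t / r i⌋ * r i) l (𝓝 t) := by
    refine tendsto_iff_dist_tendsto_zero.2
      (squeeze_zero (fun _ => dist_nonneg) (fun i => ?_) hr0)
    have floor_le := (le_div_iff₀ (hr i)).1 (Int.floor_le (t / r i))
    have lt_floor := (div_lt_iff₀ (hr i)).1 (Int.lt_floor_add_one (t / r i))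
    rw [Real.dist_eq, abs_le]
    constructor <;> linarith [hr i]
  refine hK.mem_of_tendsto ((continuous_expUnit.tendsto _).comp (tendsto_floor.smul hX))
    (Eventually.of_forall fun i => ?_)
  rw [Function.comp_apply, smul_smul, mul_assoc, mul_inv_cancel₀ (hr i).ne', mul_one,
    Int.cast_smul_eq_zsmul, expUnit_zsmul]
  exact K.zpow_mem (hZ i) _

theorem frequently_expUnit_mem_of_not_discreteTopology {K : Subgroup 𝔸ˣ}
    (hK : ¬ DiscreteTopology K) : ∃ᶠ Z in 𝓝[≠] (0 : 𝔸), expUnit Z ∈ K := by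
  contrapose hK
  have isolated : {Z : 𝔸 | Z ≠ 0 → expUnit Z ∉ K} ∈ 𝓝 0 :=
    eventually_nhdsWithin_iff.1 (not_frequently.1 hK)
  have image_mem : expUnit '' {Z : 𝔸 | Z ≠ 0 → expUnit Z ∉ K} ∈ 𝓝 (1 : 𝔸ˣ) :=
    map_expUnit_nhds_zero (𝔸 := 𝔸) ▸ image_mem_map isolated
  refine discreteTopology_of_isOpen_singleton_one (isOpen_singleton_iff_nhds_eq_pure _ |>.2 ?_)
  refine le_antisymm (le_pure_iff.2 ?_) (pure_le_nhds _)
  filter_upwards [continuous_subtype_val.continuousAt.preimage_mem_nhds image_mem]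
  rintro ⟨_, hu⟩ ⟨Z, hZ, rfl⟩
  have : Z = 0 := by_contra fun hne => hZ hne hu
  simp [this]

theorem map_list_prod_expUnit_nhds_zero {n : ℕ} {Y : Fin n → 𝔸}
    (hY : Submodule.span ℝ (Set.range Y) = ⊤) :
    map (fun t : Fin n → ℝ => ((List.finRange n).map fun i => expUnit (t i • Y i)).prod) (𝓝 0) =
      𝓝 1 := by
  have hasStrictFDerivAt_factor (i : Fin n) :
      HasStrictFDerivAt (fun t : Fin n → ℝ => NormedSpace.exp (t i • Y i))
        ((ContinuousLinearMap.proj (R := ℝ) i).smulRight (Y i)) 0 := by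
    have exp_deriv : HasStrictFDerivAt NormedSpace.exp (1 : 𝔸 →L[ℝ] 𝔸)
        ((0 : Fin n → ℝ) i • Y i) := by
      simpa using hasStrictFDerivAt_exp_zero (𝕂 := ℝ) (𝔸 := 𝔸)
    exact exp_deriv.comp (0 : Fin n → ℝ)
      ((ContinuousLinearMap.proj (R := ℝ) i).smulRight (Y i)).hasStrictFDerivAt
  have hasStrictFDerivAt_prod :=
    HasStrictFDerivAt.list_prod' fun i (_ : i ∈ List.finRange n) => hasStrictFDerivAt_factor i
  have map_prod_exp := hasStrictFDerivAt_prod.map_nhds_eq_of_surj <| by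
    refine LinearMap.range_eq_top.2 fun x => ?_
    obtain ⟨c, rfl⟩ :=
      (Submodule.mem_span_range_iff_exists_fun ℝ).1 (hY ▸ Submodule.mem_top (x := x))
    refine ⟨c, ?_⟩
    simpa using (Fin.sum_univ_fun_getElem (List.finRange n) fun i => c i • Y i).trans
      (Fin.sum_univ_def _).symm
  refine map_injective Units.val_injective ?_
  rw [Units.isOpenEmbedding_val.map_nhds_eq, Filter.map_map]
  have val_prod (t : Fin n → ℝ) :
      ((((List.finRange n).map fun i => expUnit (t i • Y i)).prod : 𝔸ˣ) : 𝔸) =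
        ((List.finRange n).map fun i => NormedSpace.exp (t i • Y i)).prod := by
    rw [← Units.coeHom_apply, map_list_prod, List.map_map]
    rfl
  simpa [Function.comp_def, val_prod] using map_prod_exp

variable [FiniteDimensional ℝ 𝔸]

theorem exists_ne_zero_mem_infinitesimalGenerators {K : Subgroup 𝔸ˣ}
    (hK : IsClosed (K : Set 𝔸ˣ)) (hdisc : ¬ DiscreteTopology K) :
    ∃ X ∈ infinitesimalGenerators K, X ≠ 0 := by
  have : ProperSpace 𝔸 := FiniteDimensional.proper_real 𝔸
  obtain ⟨Z, hZlim, hZ⟩ := exists_seq_forall_of_frequently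
    ((frequently_expUnit_mem_of_not_discreteTopology hdisc).and_eventually self_mem_nhdsWithin)
  have norm_pos (n : ℕ) : 0 < ‖Z n‖ := norm_pos_iff.2 (hZ n).2
  have mem_sphere (n : ℕ) : ‖Z n‖⁻¹ • Z n ∈ Metric.sphere (0 : 𝔸) 1 := by
    simp [norm_smul, (norm_pos n).ne']
  obtain ⟨X, hX, φ, hφ, hlim⟩ := (isCompact_sphere (0 : 𝔸) 1).tendsto_subseq mem_sphere
  have norm_tendsto : Tendsto (fun n => ‖Z (φ n)‖) atTop (𝓝 0) :=
    (tendsto_norm_zero.comp (hZlim.mono_right nhdsWithin_le_nhds)).comp hφ.tendsto_atTop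
  exact ⟨X, mem_infinitesimalGenerators_of_tendsto hK (fun n => norm_pos (φ n)) norm_tendsto
    (fun n => (hZ (φ n)).1) hlim, ne_zero_of_mem_unit_sphere ⟨X, hX⟩⟩

theorem isOpen_of_span_infinitesimalGenerators_eq_top {K : Subgroup 𝔸ˣ}
    (hK : Submodule.span ℝ (infinitesimalGenerators K) = ⊤) : IsOpen (K : Set 𝔸ˣ) := by
  obtain ⟨Y, hYK, hYspan, -⟩ :=
    Submodule.exists_fun_fin_finrank_span_eq ℝ (infinitesimalGenerators K)
  refine K.isOpen_of_mem_nhds (g := 1) ?_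
  rw [← map_list_prod_expUnit_nhds_zero (hYspan.trans hK)]
  refine mem_map.2 (univ_mem' fun t => Set.mem_preimage.2 (K.list_prod_mem ?_))
  simpa using fun i => hYK i (t i)

end OneParameterSubgroups

noncomputable section Elementary

open Matrix.SpecialLinearGroup (toGL)

local notation "M₂" => Matrix (Fin 2) (Fin 2) ℝ

/-- The matrices of determinant one whose classes lie in `G`, as a subgroup of `GL(2,ℝ)`. -/
def linearLift (G : Subgroup PSL2R) : Subgroup (GL (Fin 2) ℝ) :=
  (G.comap (QuotientGroup.mk' _)).map toGL

@[simp]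
theorem toGL_mem_linearLift {G : Subgroup PSL2R} {g : SL2R} :
    toGL g ∈ linearLift G ↔ (g : PSL2R) ∈ G :=
  Subgroup.mem_map_iff_mem SpecialLinearGroup.toGL_injective

/-- The fixed points on the boundary circle of the transformation defined by `Y`: the lines
spanned by the eigenvectors of `Y`. -/
def eigenlines (Y : M₂) : Set Boundary :=
  {p | ∃ μ : ℝ, Y *ᵥ Projectivization.rep p = μ • Projectivization.rep p}

theorem mk_mem_eigenlines {Y : M₂} {v : Fin 2 → ℝ} (hv : v ≠ 0) {μ : ℝ} (h : Y *ᵥ v = μ • v) :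
    (Projectivization.mk ℝ v hv : Boundary) ∈ eigenlines Y := by
  obtain ⟨a, ha⟩ := Projectivization.exists_smul_eq_mk_rep ℝ v hv
  refine ⟨μ, ?_⟩
  rw [← ha, Units.smul_def, mulVec_smul, h, smul_comm]

theorem eigenlines_nonempty {Y : M₂} (hY : 0 ≤ Y.discr) : (eigenlines Y).Nonempty := by
  obtain ⟨μ, hμ⟩ := exists_quadratic_eq_zero (a := (1 : ℝ)) (b := -Y.trace) (c := Y.det) one_ne_zero
    ⟨√Y.discr, by rw [Real.mul_self_sqrt hY, discr_fin_two, discrim]; ring⟩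
  have isRoot_charpoly : (toLin' Y).charpoly.IsRoot μ := by
    rw [charpoly_toLin', charpoly_fin_two]
    simpa [sub_eq_add_neg, sq] using hμ
  obtain ⟨v, hv⟩ :=
    ((Module.End.hasEigenvalue_iff_isRoot_charpoly _ μ).2 isRoot_charpoly).exists_hasEigenvector
  exact ⟨_, mk_mem_eigenlines hv.2 hv.apply_eq_smul⟩

theorem eq_smul_one_of_linearIndependent {Y : M₂} {μ : ℝ} {u v : Fin 2 → ℝ}
    (huv : LinearIndependent ℝ ![u, v]) (hu : Y *ᵥ u = μ • u) (hv : Y *ᵥ v = μ • v) :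
    Y = μ • (1 : M₂) := by
  refine Matrix.toLin'.injective ((basisOfLinearIndependentOfCardEqFinrank huv (by simp)).ext ?_)
  simp only [Fin.forall_fin_two, coe_basisOfLinearIndependentOfCardEqFinrank]
  simpa only [toLin'_apply, smul_mulVec, one_mulVec] using ⟨hu, hv⟩

theorem finite_eigenlines {Y : M₂} (hY : ∀ μ : ℝ, Y ≠ μ • 1) : (eigenlines Y).Finite := by
  choose! μ hμ using fun p (hp : p ∈ eigenlines Y) => hp
  refine Set.Finite.of_finite_image (f := μ)
    ((Module.End.finite_hasEigenvalue (Matrix.toLin' Y)).subset ?_) fun p hp q hq hpq => ?_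
  · rintro _ ⟨p, hp, rfl⟩
    exact Module.End.hasEigenvalue_of_hasEigenvector (Module.End.hasEigenvector_iff.2
      ⟨Module.End.mem_eigenspace_iff.2 (by simpa using hμ p hp), Projectivization.rep_nonzero p⟩)
  · by_contra hne
    exact hY _ (eq_smul_one_of_linearIndependent
      ((Projectivization.linearIndependent_pair_iff_ne (D := p) (D' := q)).2 hne)
      (hμ p hp) (hpq ▸ hμ q hq))

theorem eigenlines_subset_of_commute {Y Z : M₂} (hY : ∀ μ : ℝ, Y ≠ μ • 1) (h : Commute Y Z) :
    eigenlines Y ⊆ eigenlines Z := by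
  rintro p ⟨μ, hμ⟩
  by_contra hp
  refine hY μ (eq_smul_one_of_linearIndependent (v := Z *ᵥ Projectivization.rep p) ?_ hμ ?_)
  · exact (LinearIndependent.pair_iff' (Projectivization.rep_nonzero p)).2
      fun c hc => hp ⟨c, hc.symm⟩
  · rw [mulVec_mulVec, h.eq, ← mulVec_mulVec, hμ, mulVec_smul]

theorem boundaryAct_mem_eigenlines {Y : M₂} {g : SL2R} {p : Boundary}
    (hp : p ∈ eigenlines ((toGL g)⁻¹.val * Y * (toGL g).val)) : boundaryAct g p ∈ eigenlines Y := by
  obtain ⟨μ, hμ⟩ := hp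
  rw [← Projectivization.mk_rep p]
  refine mk_mem_eigenlines _ (μ := μ) ?_
  change Y *ᵥ ((toGL g).val *ᵥ _) = μ • ((toGL g).val *ᵥ _)
  rw [← mulVec_smul, ← hμ, mulVec_mulVec, mulVec_mulVec, mul_assoc, Units.mul_inv_cancel_left]

theorem smul_fixedPt_of_commute {y w : GL (Fin 2) ℝ} (hpos : 0 < y.val.det) (hy : y.IsElliptic)
    (h : Commute y w) : w • UpperHalfPlane.fixedPt y hy = UpperHalfPlane.fixedPt y hy := by
  have smul_fixedPt := (UpperHalfPlane.gl_smul_eq_self_iff_eq_fixedPt hpos hy).2 rfl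
  rw [← UpperHalfPlane.gl_smul_eq_self_iff_eq_fixedPt hpos hy, smul_smul, h.eq, mul_smul,
    smul_fixedPt]

theorem isElementary_of_commute_conj {G : Subgroup PSL2R} {Y : M₂} (hY : ∀ μ : ℝ, Y ≠ μ • 1)
    (h : ∀ g ∈ linearLift G, Commute Y (g.val * Y * g⁻¹.val)) : IsElementary G := by
  rcases le_or_gt 0 Y.discr with discr_nonneg | discr_neg
  · obtain ⟨p, hp⟩ := eigenlines_nonempty discr_nonneg
    refine Or.inr ⟨p, (finite_eigenlines hY).subset ?_⟩
    rintro _ ⟨g, hg, rfl⟩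
    have commute_conj_inv := h (toGL g)⁻¹ (inv_mem (toGL_mem_linearLift.2 hg))
    rw [inv_inv] at commute_conj_inv
    exact boundaryAct_mem_eigenlines (eigenlines_subset_of_commute hY commute_conj_inv hp)
  · have det_pos : 0 < Y.det := by
      rw [discr_fin_two] at discr_neg
      linarith [sq_nonneg Y.trace]
    lift Y to GL (Fin 2) ℝ using (isUnit_iff_isUnit_det Y).2 det_pos.ne'.isUnit
    set z := UpperHalfPlane.fixedPt Y discr_neg
    refine Or.inl ⟨z, (Set.finite_singleton z).subset ?_⟩
    rintro _ ⟨g, hg, rfl⟩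
    have conj_smul : (toGL g * Y * (toGL g)⁻¹) • z = z :=
      smul_fixedPt_of_commute det_pos discr_neg
        (Commute.units_val_iff.1 (h (toGL g) (toGL_mem_linearLift.2 hg)))
    have inv_smul : (toGL g)⁻¹ • z = z := by
      rw [← UpperHalfPlane.gl_smul_eq_self_iff_eq_fixedPt det_pos discr_neg, eq_inv_smul_iff]
      simpa only [smul_smul, mul_assoc] using conj_smul
    exact eq_inv_smul_iff.1 inv_smul.symm

theorem commute_of_finrank_le_two {K E : Type*} [Field K] [Ring E] [Algebra K E] [Nontrivial E]
    {W : Submodule K E} [FiniteDimensional K W] (hW : Module.finrank K W ≤ 2) (hone : 1 ∈ W)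
    {a b : E} (ha : a ∈ W) (hb : b ∈ W) : Commute a b := by
  by_cases hscalar : ∃ c : K, c • (1 : E) = a
  · obtain ⟨c, rfl⟩ := hscalar
    exact (Commute.one_left b).smul_left c
  · have linearIndependent : LinearIndependent K ![1, a] :=
      (LinearIndependent.pair_iff' one_ne_zero).2 (not_exists.1 hscalar)
    have span_eq : Submodule.span K (Set.range ![1, a]) = W := by
      refine Submodule.eq_of_le_of_finrank_le (Submodule.span_le.2 (Set.range_subset_iff.2
        (Fin.forall_fin_two.2 ⟨hone, ha⟩))) ?_
      rwa [finrank_span_eq_card linearIndependent, Fintype.card_fin]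
    obtain ⟨c, rfl⟩ := (Submodule.mem_span_range_iff_exists_fun K).1 (span_eq ▸ hb)
    rw [Fin.sum_univ_two]
    exact ((Commute.one_right a).smul_right (c 0)).add_right ((Commute.refl a).smul_right (c 1))

/-- The trace form `(A, B) ↦ tr (A B)` on matrices. Its invariance under conjugation makes the
orthogonal of a conjugation-stable subspace conjugation-stable. -/
def matrixTraceForm (n K : Type*) [Fintype n] [DecidableEq n] [Field K] :
    LinearMap.BilinForm K (Matrix n n K) :=
  (LinearMap.mul K (Matrix n n K)).compr₂ (traceLinearMap n K K)

theorem nondegenerate_matrixTraceForm (n K : Type*) [Fintype n] [DecidableEq n] [Field K] :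
    (matrixTraceForm n K).Nondegenerate :=
  ⟨fun A hA => ext_iff_trace_mul_right.2 fun B => by simpa [matrixTraceForm] using hA B,
    fun A hA => ext_iff_trace_mul_left.2 fun B => by simpa [matrixTraceForm] using hA B⟩

-- A proper subspace of dimension at most two containing `1` is commutative; one of dimension three
-- is replaced by its orthogonal line for the trace form, which is also stable under conjugation.
theorem eq_top_of_conj_mem {G : Subgroup PSL2R} (hG : ¬ IsElementary G) {W : Submodule ℝ M₂}
    (hone : 1 ∈ W) (hconj : ∀ g ∈ linearLift G, ∀ A ∈ W, g.val * A * g⁻¹.val ∈ W)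
    {Y : M₂} (hYW : Y ∈ W) (hY : ∀ μ : ℝ, Y ≠ μ • 1) : W = ⊤ := by
  contrapose hG
  have finrank_lt : Module.finrank ℝ W < 4 := by
    simpa [Module.finrank_matrix] using Submodule.finrank_lt hG
  rcases Nat.lt_succ_iff_lt_or_eq.1 finrank_lt with finrank_le | finrank_eq
  · exact isElementary_of_commute_conj hY fun g hg =>
      commute_of_finrank_le_two (Nat.lt_succ_iff.1 finrank_le) hone hYW (hconj g hg Y hYW)
  have finrank_orthogonal : Module.finrank ℝ ((matrixTraceForm (Fin 2) ℝ).orthogonal W) = 1 := by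
    simp [LinearMap.BilinForm.finrank_orthogonal (nondegenerate_matrixTraceForm (Fin 2) ℝ),
      Module.finrank_matrix, finrank_eq]
  obtain ⟨⟨Z, hZ⟩, Z_ne_zero, hspan⟩ := finrank_eq_one_iff'.1 finrank_orthogonal
  have trace_mul_eq_zero (A : M₂) (hA : A ∈ W) : (A * Z).trace = 0 := hZ A hA
  refine isElementary_of_commute_conj (Y := Z) ?_ fun g hg => ?_
  · rintro μ rfl
    have μ_eq_zero : μ = 0 := by simpa using trace_mul_eq_zero 1 hone
    exact Z_ne_zero (Subtype.ext (by simp [μ_eq_zero]))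
  · have conj_mem : g.val * Z * g⁻¹.val ∈ (matrixTraceForm (Fin 2) ℝ).orthogonal W := by
      intro A hA
      have := trace_mul_eq_zero _ (hconj g⁻¹ (inv_mem hg) A hA)
      rw [inv_inv, mul_assoc, mul_assoc, trace_mul_comm] at this
      change (A * (g.val * Z * g⁻¹.val)).trace = 0
      simpa only [mul_assoc] using this
    obtain ⟨c, hc⟩ := hspan ⟨_, conj_mem⟩
    have conj_eq : c • Z = g.val * Z * g⁻¹.val := congrArg Subtype.val hc
    exact conj_eq ▸ (Commute.refl Z).smul_right c

end Elementary

section Density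

theorem subgroup_eq_top_of_isOpen {G : Type*} [Group G] [TopologicalSpace G] [IsTopologicalGroup G]
    [PreconnectedSpace G] {H : Subgroup G} (hH : IsOpen (H : Set G)) : H = ⊤ :=
  SetLike.coe_injective
    (IsClopen.eq_univ ⟨H.isClosed_of_isOpen hH, hH⟩ (OneMemClass.coe_nonempty H))

variable {H G : Type*} [Group H] [Group G] [TopologicalSpace G] [IsTopologicalGroup G]
  [PreconnectedSpace G] {f : H →* G}

theorem subgroupClosure_preimage_eq_top (hf : DenseRange f) {U : Set G} (hU : U ∈ 𝓝 1) :
    Subgroup.closure (f ⁻¹' U) = ⊤ := by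
  set N := Subgroup.closure (f ⁻¹' U)
  have subset_closure : interior U ⊆ (N.map f).topologicalClosure := by
    refine (hf.open_subset_closure_inter isOpen_interior).trans (closure_mono ?_)
    rintro _ ⟨hx, h, rfl⟩
    exact Subgroup.mem_map_of_mem f (Subgroup.subset_closure (interior_subset (s := U) hx))
  have isOpen_closure : IsOpen ((N.map f).topologicalClosure : Set G) :=
    Subgroup.isOpen_of_mem_nhds _ (g := 1)
      (mem_of_superset (interior_mem_nhds.2 hU) subset_closure)
  have dense_map : Dense (N.map f : Set G) := dense_iff_closure_eq.2
    (congrArg SetLike.coe (subgroup_eq_top_of_isOpen isOpen_closure))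
  refine (Subgroup.eq_top_iff' N).2 fun h => ?_
  have tendsto_inv_mul : Tendsto (fun g => g⁻¹ * f h) (𝓝 (f h)) (𝓝 1) :=
    (by fun_prop : Continuous fun g => g⁻¹ * f h).tendsto' _ _ (inv_mul_cancel _)
  obtain ⟨_, ⟨n, hn, rfl⟩, hnU⟩ := dense_map.inter_nhds_nonempty (tendsto_inv_mul hU)
  have inv_mul_mem : n⁻¹ * h ∈ N := Subgroup.subset_closure (by simpa using hnU)
  exact (N.mul_mem_cancel_left (inv_mem hn)).1 inv_mul_mem

theorem submonoidClosure_preimage_eq_top (hf : DenseRange f) {U : Set G} (hU : U ∈ 𝓝 1) :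
    Submonoid.closure (f ⁻¹' U) = ⊤ := by
  have closure_eq_top := subgroupClosure_preimage_eq_top hf (inter_mem hU (inv_mem_nhds_one G hU))
  rw [← top_le_iff, ← Subgroup.top_toSubmonoid, ← closure_eq_top, Subgroup.closure_toSubmonoid]
  refine Submonoid.closure_mono (Set.union_subset (fun h hh => hh.1) fun h hh => ?_)
  simpa using hh.2

variable {R A : Type*} [CommSemiring R] [Semiring A] [Algebra R A] [IsArtinian R A] (σ : H →* A)

-- The spans of `σ '' (f ⁻¹' U)` decrease with `U`, so they stabilize; the least one is stable under
-- `σ g` for `f g` near `1`, hence for all `g`, since these elements generate `H`.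
theorem apply_mem_span_image_preimage (hf : DenseRange f) {U : Set G} (hU : U ∈ 𝓝 1) (h : H) :
    σ h ∈ Submodule.span R (σ '' (f ⁻¹' U)) := by
  obtain ⟨L, ⟨U₀, hU₀, rfl⟩, L_minimal⟩ := IsArtinian.set_has_minimal
    {L | ∃ U ∈ 𝓝 (1 : G), Submodule.span R (σ '' (f ⁻¹' U)) = L} ⟨_, _, univ_mem, rfl⟩
  set L := Submodule.span R (σ '' (f ⁻¹' U₀))
  have L_le (V : Set G) (hV : V ∈ 𝓝 1) : L ≤ Submodule.span R (σ '' (f ⁻¹' V)) := by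
    have inter_le : Submodule.span R (σ '' (f ⁻¹' (U₀ ∩ V))) ≤ L :=
      Submodule.span_mono (Set.image_mono (Set.preimage_mono Set.inter_subset_left))
    have inter_eq := inter_le.eq_of_not_lt (L_minimal _ ⟨_, inter_mem hU₀ hV, rfl⟩)
    exact inter_eq.ge.trans
      (Submodule.span_mono (Set.image_mono (Set.preimage_mono Set.inter_subset_right)))
  obtain ⟨V, hVopen, hV1, hVmul⟩ := exists_open_nhds_one_mul_subset hU₀
  have hV := hVopen.mem_nhds hV1
  have mul_mem_L : ∀ g, ∀ x ∈ L, σ g * x ∈ L := by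
    intro g
    induction (submonoidClosure_preimage_eq_top hf hV ▸ Submonoid.mem_top g :
      g ∈ Submonoid.closure (f ⁻¹' V)) using Submonoid.closure_induction with
    | mem g hg =>
      refine (L_le V hV).trans
        (Submodule.span_le (p := L.comap (LinearMap.mulLeft R (σ g))) |>.2 ?_)
      rintro _ ⟨k, hk, rfl⟩
      exact Submodule.subset_span ⟨g * k, by
        simpa using hVmul (Set.mul_mem_mul hg hk), map_mul σ g k⟩
    | one => simp
    | mul g k _ _ ihg ihk =>
      intro x hx
      rw [map_mul, mul_assoc]
      exact ihg _ (ihk x hx)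
  have one_mem_L : (1 : A) ∈ L :=
    Submodule.subset_span ⟨1, by simpa using mem_of_mem_nhds hU₀, map_one σ⟩
  exact L_le U hU (by simpa using mul_mem_L h 1 one_mem_L)

theorem linearMap_apply_eq_zero_of_isOpen {M : Type*} [AddCommMonoid M] [Module R M] (φ : A →ₗ[R] M)
    (hf : DenseRange f) {U : Set G} (hU : IsOpen U) (hne : U.Nonempty)
    (hφ : ∀ h, f h ∈ U → φ (σ h) = 0) (h : H) : φ (σ h) = 0 := by
  obtain ⟨h₀, hh₀⟩ := hf.exists_mem_open hU hne
  have translate_mem : (f h₀ * ·) ⁻¹' U ∈ 𝓝 (1 : G) :=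
    (continuous_const_mul (f h₀)).continuousAt.preimage_mem_nhds (by simpa using hU.mem_nhds hh₀)
  have span_le : Submodule.span R (σ '' (f ⁻¹' ((f h₀ * ·) ⁻¹' U))) ≤
      LinearMap.ker (φ ∘ₗ LinearMap.mulLeft R (σ h₀)) := by
    refine Submodule.span_le.2 ?_
    rintro _ ⟨k, hk, rfl⟩
    simpa using hφ (h₀ * k) (by simpa using hk)
  have := span_le (apply_mem_span_image_preimage σ hf translate_mem (h₀⁻¹ * h))
  simpa [← map_mul] using this

end Density

section DenseSubgroups

open Matrix.SpecialLinearGroup (toGL)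

attribute [local instance] Matrix.linftyOpNormedRing Matrix.linftyOpNormedAlgebra

instance : IsTopologicalGroup SL2R := Matrix.SpecialLinearGroup.topologicalGroup

theorem continuous_transvection {i j : Fin 2} (hij : i ≠ j) :
    Continuous fun c : ℝ => (SpecialLinearGroup.transvection hij c : SL2R) := by
  refine continuous_induced_rng.2 ?_
  simp only [Function.comp_def, SpecialLinearGroup.transvection_coe]
  exact continuous_const.add (singleLinearMap ℝ i j : ℝ →ₗ[ℝ] _).continuous_of_finiteDimensional

instance : ConnectedSpace SL2R := by
  refine connectedSpace_iff_connectedComponent.2 ⟨1, Set.eq_univ_of_forall fun A => ?_⟩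
  refine SL2.transvection_induction (· ∈ Subgroup.connectedComponentOfOne SL2R)
    (fun i j hij c => ?_) (fun A B => mul_mem) A
  refine (isPreconnected_range (continuous_transvection hij)).subset_connectedComponent
    ⟨0, ?_⟩ ⟨c, rfl⟩
  simp

instance : ConnectedSpace PSL2R :=
  QuotientGroup.mk_surjective.connectedSpace QuotientGroup.continuous_mk

theorem ne_smul_one_of_det_expUnit_eq_one {n : Type*} [Fintype n] [DecidableEq n] [Nonempty n]
    {X : Matrix n n ℝ} (hX : X ≠ 0) (hdet : (expUnit X).val.det = 1) (μ : ℝ) : X ≠ μ • 1 := by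
  rintro rfl
  rw [val_expUnit, exp_smul_one, det_smul, det_one, mul_one,
    pow_eq_one_iff_of_nonneg (Real.exp_nonneg μ) Fintype.card_ne_zero, Real.exp_eq_one_iff] at hdet
  exact hX (by rw [hdet, zero_smul])

theorem not_discreteTopology_linearLift {G : Subgroup PSL2R} (hG : ¬ IsDiscreteSubgroup G) :
    ¬ DiscreteTopology (linearLift G) := by
  contrapose hG
  obtain ⟨V, hVopen, hV⟩ := isOpen_induced_iff.1 (isOpen_discrete ({1} : Set (linearLift G)))
  have isOpen_image : IsOpen ((QuotientGroup.mk : SL2R → PSL2R) '' (toGL ⁻¹' V)) :=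
    QuotientGroup.isOpenMap_coe _ (hVopen.preimage SpecialLinearGroup.continuous_toGL)
  refine discreteTopology_of_isOpen_singleton_one
    (isOpen_induced_iff.2 ⟨_, isOpen_image, Set.eq_singleton_iff_unique_mem.2 ⟨?_, ?_⟩⟩)
  · have one_mem : (1 : linearLift G) ∈ Subtype.val ⁻¹' V := by simp [hV]
    exact ⟨1, by simpa using one_mem, rfl⟩
  · rintro ⟨_, hgG⟩ ⟨g, hgV, rfl⟩
    have lift_eq_one : (⟨toGL g, toGL_mem_linearLift.2 hgG⟩ : linearLift G) ∈ ({1} : Set _) :=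
      hV ▸ hgV
    have g_eq_one : g = 1 :=
      SpecialLinearGroup.toGL_injective ((congrArg Subtype.val lift_eq_one).trans (map_one _).symm)
    exact Subtype.ext (congrArg QuotientGroup.mk g_eq_one)

theorem topologicalClosure_linearLift_le_ker_det (G : Subgroup PSL2R) :
    (linearLift G).topologicalClosure ≤ GeneralLinearGroup.det.ker := by
  refine Subgroup.topologicalClosure_minimal _ ?_ ?_
  · rintro _ ⟨g, -, rfl⟩
    simp [MonoidHom.mem_ker]
  · exact isClosed_singleton.preimage GeneralLinearGroup.continuous_det

theorem isOpen_topologicalClosure_linearLift_sup_center {G : Subgroup PSL2R}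
    (hE : ¬ IsElementary G) (hD : ¬ IsDiscreteSubgroup G) :
    IsOpen (((linearLift G).topologicalClosure ⊔ Subgroup.center (GL (Fin 2) ℝ) :
      Subgroup (GL (Fin 2) ℝ)) : Set (GL (Fin 2) ℝ)) := by
  set K := (linearLift G).topologicalClosure
  have le_K : linearLift G ≤ K := Subgroup.le_topologicalClosure _
  have not_discrete_K : ¬ DiscreteTopology K := fun _ =>
    not_discreteTopology_linearLift hD (DiscreteTopology.of_subset ‹_› le_K)
  obtain ⟨X, hXK, X_ne_zero⟩ := exists_ne_zero_mem_infinitesimalGenerators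
    (Subgroup.isClosed_topologicalClosure _) not_discrete_K
  have det_expUnit_X : (expUnit X).val.det = 1 := by
    have := topologicalClosure_linearLift_le_ker_det G (hXK 1)
    rwa [one_smul, MonoidHom.mem_ker, Units.ext_iff] at this
  refine isOpen_of_span_infinitesimalGenerators_eq_top
    (eq_top_of_conj_mem hE ?_ ?_ ?_ (ne_smul_one_of_det_expUnit_eq_one X_ne_zero det_expUnit_X))
  · exact Submodule.subset_span
      (infinitesimalGenerators_mono le_sup_right one_mem_infinitesimalGenerators_center)
  · exact fun g hg A hA =>
      conj_mem_span_infinitesimalGenerators (le_sup_left (a := K) (le_K hg)) hA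
  · exact Submodule.subset_span (infinitesimalGenerators_mono le_sup_left hXK)

theorem toGL_mem_topologicalClosure_linearLift {G : Subgroup PSL2R} (hE : ¬ IsElementary G)
    (hD : ¬ IsDiscreteSubgroup G) (g : SL2R) : toGL g ∈ (linearLift G).topologicalClosure := by
  set K := (linearLift G).topologicalClosure
  have isOpen_comap : IsOpen ((K ⊔ Subgroup.center (GL (Fin 2) ℝ)).comap toGL : Set SL2R) :=
    (isOpen_topologicalClosure_linearLift_sup_center hE hD).preimage
      SpecialLinearGroup.continuous_toGL
  have g_mem : toGL g ∈ K ⊔ Subgroup.center (GL (Fin 2) ℝ) := by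
    rw [← Subgroup.mem_comap, subgroup_eq_top_of_isOpen isOpen_comap]
    exact Subgroup.mem_top g
  obtain ⟨k, hk, z, hz, hkz⟩ := Subgroup.mem_sup_of_normal_right.1 g_mem
  obtain ⟨k, rfl⟩ : k ∈ Set.range (toGL : SL2R → GL (Fin 2) ℝ) := by
    rw [SpecialLinearGroup.range_toGL]
    exact topologicalClosure_linearLift_le_ker_det G hk
  obtain rfl : z = toGL (k⁻¹ * g) := by rw [map_mul, map_inv, ← hkz, inv_mul_cancel_left]
  have mk_eq_one : ((k⁻¹ * g : SL2R) : PSL2R) = 1 :=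
    (QuotientGroup.eq_one_iff _).2 ((SpecialLinearGroup.toGL_mem_center_iff _).1 hz)
  have z_mem_lift : toGL (k⁻¹ * g) ∈ linearLift G :=
    toGL_mem_linearLift.2 (mk_eq_one ▸ one_mem G)
  exact hkz ▸ mul_mem hk (Subgroup.le_topologicalClosure _ z_mem_lift)

theorem dense_of_not_isElementary_of_not_isDiscreteSubgroup {G : Subgroup PSL2R}
    (hE : ¬ IsElementary G) (hD : ¬ IsDiscreteSubgroup G) : Dense (G : Set PSL2R) := by
  have isInducing_toGL : IsInducing (toGL : SL2R → GL (Fin 2) ℝ) :=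
    SpecialLinearGroup.isInducing_toGL
  have dense_preimage : Dense ((QuotientGroup.mk : SL2R → PSL2R) ⁻¹' G) := by
    intro g
    rw [isInducing_toGL.closure_eq_preimage_closure_image]
    exact toGL_mem_topologicalClosure_linearLift hE hD g
  exact (QuotientGroup.mk_surjective.denseRange.dense_image QuotientGroup.continuous_mk
    dense_preimage).mono (Set.image_preimage_subset _ _)

end DenseSubgroups

section Traces

open scoped Kronecker

/-- The tensor square of the tautological representation of `SL(2,ℝ)`. It descends to `PSL(2,ℝ)`,
where its character is the square of `absTrace`. -/
def tensorSquare : PSL2R →* Matrix (Fin 2 × Fin 2) (Fin 2 × Fin 2) ℝ :=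
  QuotientGroup.lift (Subgroup.center SL2R)
    { toFun := fun g => g.val ⊗ₖ g.val
      map_one' := by simp
      map_mul' := fun g h => by simp [mul_kronecker_mul] }
    fun z hz => by
      obtain ⟨r, hr, hz⟩ := Matrix.SpecialLinearGroup.mem_center_iff.1 hz
      have r_mul_self : r * r = 1 := by simpa [sq] using hr
      simp [← hz, ← smul_one_eq_diagonal, smul_smul, smul_kronecker, kronecker_smul, r_mul_self]

theorem trace_tensorSquare_mk (g : SL2R) : (tensorSquare g).trace = g.val.trace ^ 2 :=
  (trace_kronecker _ _).trans (sq _).symm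

theorem absTrace_eq_sqrt (A : PSL2R) : absTrace A = √(tensorSquare A).trace := by
  rw [← QuotientGroup.out_eq' A, trace_tensorSquare_mk, Real.sqrt_sq_eq_abs, QuotientGroup.out_eq']
  rfl

theorem trace_tensorSquare (A : PSL2R) : (tensorSquare A).trace = absTrace A ^ 2 := by
  rw [← QuotientGroup.out_eq' A, trace_tensorSquare_mk, QuotientGroup.out_eq']
  exact (sq_abs _).symm

theorem absTrace_mk (g : SL2R) : absTrace g = |g.val.trace| := by
  rw [absTrace_eq_sqrt, trace_tensorSquare_mk, Real.sqrt_sq_eq_abs]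

theorem absTrace_eq_of_isConj {A B : PSL2R} (h : IsConj A B) : absTrace A = absTrace B := by
  obtain ⟨C, rfl⟩ := isConj_iff.1 h
  rw [absTrace_eq_sqrt, absTrace_eq_sqrt, map_mul, trace_mul_comm, ← map_mul,
    inv_mul_cancel_left]

theorem continuous_absTrace : Continuous absTrace := by
  refine (QuotientGroup.isQuotientMap_mk _).continuous_iff.2 ?_
  have : absTrace ∘ QuotientGroup.mk = fun g : SL2R => |g.val.trace| := funext absTrace_mk
  rw [this]
  exact (continuous_induced_dom.matrix_trace).abs

theorem absTrace_eq_of_eq_on_isOpen {Γ : Type*} [Group Γ] {ρ₁ ρ₂ : Γ →* PSL2R}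
    (hE : ¬ IsElementary ρ₁.range) (hD : ¬ IsDiscreteSubgroup ρ₁.range) {U : Set PSL2R}
    (hU : IsOpen U) (hne : U.Nonempty)
    (hρ : ∀ γ, ρ₁ γ ∈ U → absTrace (ρ₁ γ) = absTrace (ρ₂ γ)) (γ : Γ) :
    absTrace (ρ₁ γ) = absTrace (ρ₂ γ) := by
  have denseRange : DenseRange ρ₁ :=
    dense_of_not_isElementary_of_not_isDiscreteSubgroup hE hD
  have trace_sub_eq_zero := linearMap_apply_eq_zero_of_isOpen
    ((tensorSquare.comp ρ₁).prod (tensorSquare.comp ρ₂))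
    (traceLinearMap (Fin 2 × Fin 2) ℝ ℝ ∘ₗ LinearMap.fst ℝ _ _ -
      traceLinearMap (Fin 2 × Fin 2) ℝ ℝ ∘ₗ LinearMap.snd ℝ _ _) denseRange hU hne
    (fun γ hγ => by simp [trace_tensorSquare, hρ γ hγ]) γ
  rw [absTrace_eq_sqrt, absTrace_eq_sqrt]
  exact congrArg _ (sub_eq_zero.1 trace_sub_eq_zero)

end Traces

section RotationNumber

open Matrix.SpecialLinearGroup (toGL)

theorem isOpen_setOf_isElliptic : IsOpen {A : PSL2R | IsElliptic A} :=
  isOpen_lt continuous_absTrace continuous_const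

theorem isElliptic_mk_rotMat_pi_div_two : IsElliptic (rotMat (π / 2)) := by
  refine (absTrace_mk _).trans_lt ?_
  simp [rotMat, trace_fin_two]

theorem quotientMk_neg (g : SL2R) : ((-g : SL2R) : PSL2R) = g := by
  refine QuotientGroup.eq.2 (Matrix.SpecialLinearGroup.mem_center_iff.2 ⟨-1, by simp, ?_⟩)
  ext i j
  fin_cases i <;> fin_cases j <;> simp

theorem trace_sq_lt_four_of_isElliptic {g : SL2R} (hg : IsElliptic g) : g.val.trace ^ 2 < 4 := by
  have abs_trace_lt : |g.val.trace| < 2 := absTrace_mk g ▸ hg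
  linarith [sq_lt_sq' (abs_lt.1 abs_trace_lt).1 (abs_lt.1 abs_trace_lt).2]

theorem exists_cos_eq_sin_eq {a b : ℝ} (h : a ^ 2 + b ^ 2 = 1) (hb : 0 < b) :
    ∃ θ ∈ Set.Ioo 0 π, cos θ = a ∧ sin θ = b := by
  have abs_a_lt : |a| < 1 := (sq_lt_one_iff_abs_lt_one a).1 (by nlinarith)
  obtain ⟨neg_one_lt, lt_one⟩ := abs_lt.1 abs_a_lt
  refine ⟨arccos a, ⟨arccos_pos.2 lt_one, arccos_lt_pi.2 neg_one_lt⟩,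
    cos_arccos neg_one_lt.le lt_one.le, ?_⟩
  rw [sin_arccos, ← h, add_sub_cancel_left, Real.sqrt_sq hb.le]

theorem firstRow_sq_add_sq_eq_one {g : SL2R} (hdiag : g 0 0 = g 1 1) (hoff : g 0 1 = -g 1 0) :
    g 0 0 ^ 2 + g 0 1 ^ 2 = 1 := by
  have det_eq_one := g.det_coe
  rw [det_fin_two, ← hdiag] at det_eq_one
  linear_combination det_eq_one + g 0 1 * hoff

theorem exists_rotMat_eq {g : SL2R} (hdiag : g 0 0 = g 1 1) (hoff : g 0 1 = -g 1 0)
    (hpos : 0 < g 0 1) : ∃ θ ∈ Set.Ioo 0 π, rotMat θ = g := by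
  obtain ⟨θ, hθ, hcos, hsin⟩ := exists_cos_eq_sin_eq (firstRow_sq_add_sq_eq_one hdiag hoff) hpos
  refine ⟨θ, hθ, ?_⟩
  ext i j
  fin_cases i <;> fin_cases j <;> simp [rotMat, hcos, hsin, hdiag, hoff]

theorem exists_mk_rotMat_eq_of_smul_I {k : SL2R} (hk : k • UpperHalfPlane.I = UpperHalfPlane.I)
    (h : IsElliptic k) : ∃ θ ∈ Set.Ioo 0 π, (rotMat θ : PSL2R) = k := by
  obtain ⟨hdiag, hoff⟩ : k 0 0 = k 1 1 ∧ k 0 1 = -k 1 0 :=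
    (UpperHalfPlane.gl_smul_I_eq_I_iff_of_pos (g := toGL k) (by simp)).1 hk
  have ne_zero : k 0 1 ≠ 0 := by
    intro eq_zero
    have trace_sq_lt := trace_sq_lt_four_of_isElliptic h
    have sq_add_sq := firstRow_sq_add_sq_eq_one hdiag hoff
    rw [trace_fin_two, ← hdiag] at trace_sq_lt
    rw [eq_zero] at sq_add_sq
    linarith
  rcases ne_zero.lt_or_gt with neg | pos
  · obtain ⟨θ, hθ, h_eq⟩ := exists_rotMat_eq (g := -k) (by simpa using hdiag) (by simp [hoff])
      (by simpa using neg)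
    exact ⟨θ, hθ, h_eq ▸ quotientMk_neg k⟩
  · obtain ⟨θ, hθ, h_eq⟩ := exists_rotMat_eq hdiag hoff pos
    exact ⟨θ, hθ, congrArg _ h_eq⟩

theorem exists_isConj_rotMat {A : PSL2R} (hA : IsElliptic A) :
    ∃ θ ∈ Set.Ioo 0 π, IsConj (rotMat θ : PSL2R) A := by
  obtain ⟨g, rfl⟩ := QuotientGroup.mk_surjective A
  have discr_neg : (toGL g).IsElliptic := by
    change g.val.discr < 0
    rw [discr_fin_two, g.det_coe]
    linarith [trace_sq_lt_four_of_isElliptic hA]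
  obtain ⟨h, hI⟩ := MulAction.exists_smul_eq SL2R UpperHalfPlane.I
    (UpperHalfPlane.fixedPt (toGL g) discr_neg)
  have smul_fixedPt : g • h • UpperHalfPlane.I = h • UpperHalfPlane.I :=
    (UpperHalfPlane.gl_smul_eq_self_iff_eq_fixedPt (g := toGL g) (by simp) discr_neg).2 hI
  have conj_smul_I : (h⁻¹ * g * h) • UpperHalfPlane.I = UpperHalfPlane.I := by
    rw [mul_smul, mul_smul, smul_fixedPt, inv_smul_smul]
  have isConj : IsConj ((h⁻¹ * g * h : SL2R) : PSL2R) g := isConj_iff.2 ⟨h, by simp [mul_assoc]⟩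
  obtain ⟨θ, hθ, h_eq⟩ := exists_mk_rotMat_eq_of_smul_I conj_smul_I
    ((absTrace_eq_of_isConj isConj).trans_lt hA)
  exact ⟨θ, hθ, h_eq ▸ isConj⟩

theorem exists_rot_eq {A : PSL2R} (hA : ∃ θ ∈ Set.Ioo 0 π, IsConj (rotMat θ : PSL2R) A) :
    ∃ θ ∈ Set.Ioo 0 π, IsConj (rotMat θ : PSL2R) A ∧ rot A = ((2 * θ : ℝ) : AddCircle (2 * π)) :=
  ⟨hA.choose, hA.choose_spec.1, hA.choose_spec.2, dif_pos hA⟩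

theorem exists_isConj_rotMat_of_rot_ne_zero {A : PSL2R} (hA : rot A ≠ 0) :
    ∃ θ ∈ Set.Ioo 0 π, IsConj (rotMat θ : PSL2R) A := by
  contrapose hA
  exact dif_neg hA

theorem injOn_coe_two_mul :
    Set.InjOn (fun θ : ℝ => ((2 * θ : ℝ) : AddCircle (2 * π))) (Set.Ico 0 π) := by
  have : Fact (0 < 2 * π) := ⟨two_pi_pos⟩
  intro θ hθ η hη h
  have two_mul_mem {θ : ℝ} (hθ : θ ∈ Set.Ico 0 π) : 2 * θ ∈ Set.Ico 0 (0 + 2 * π) :=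
    ⟨by linarith [hθ.1], by linarith [hθ.2]⟩
  exact mul_left_cancel₀ two_ne_zero
    ((AddCircle.coe_eq_coe_iff_of_mem_Ico (two_mul_mem hθ) (two_mul_mem hη)).1 h)

theorem isConj_of_isElliptic_of_rot_eq {A B : PSL2R} (hA : IsElliptic A) (h : rot A = rot B) :
    IsConj A B := by
  obtain ⟨θ, hθ, hconjA, hrotA⟩ := exists_rot_eq (exists_isConj_rotMat hA)
  have rot_B_ne_zero : rot B ≠ 0 := by
    rw [← h, hrotA]
    intro h0
    exact hθ.1.ne' (injOn_coe_two_mul (Set.Ioo_subset_Ico_self hθ) ⟨le_rfl, pi_pos⟩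
      (by simpa using h0))
  obtain ⟨η, hη, hconjB, hrotB⟩ := exists_rot_eq (exists_isConj_rotMat_of_rot_ne_zero rot_B_ne_zero)
  obtain rfl : θ = η := injOn_coe_two_mul (Set.Ioo_subset_Ico_self hθ)
    (Set.Ioo_subset_Ico_self hη) (hrotA.symm.trans (h.trans hrotB))
  exact hconjA.symm.trans hconjB

end RotationNumber

/-- If `ρ₁(Γ)` is non elementary and non discrete, and `ρ₁, ρ₂` have the same rotation numbers
elementwise, then `|tr(ρ₁(γ))| = |tr(ρ₂(γ))|` for every `γ ∈ Γ`. -/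
theorem absTrace_eq_of_rot_eq {Γ : Type*} [Group Γ] (ρ₁ ρ₂ : Γ →* PSL2R)
    (h_nonelem : ¬ IsElementary ρ₁.range)
    (h_nondisc : ¬ IsDiscreteSubgroup ρ₁.range)
    (h_rot : ∀ γ : Γ, rot (ρ₁ γ) = rot (ρ₂ γ)) :
    ∀ γ : Γ, absTrace (ρ₁ γ) = absTrace (ρ₂ γ) :=
  absTrace_eq_of_eq_on_isOpen h_nonelem h_nondisc isOpen_setOf_isElliptic
    ⟨_, isElliptic_mk_rotMat_pi_div_two⟩
    fun γ hγ => absTrace_eq_of_isConj (isConj_of_isElliptic_of_rot_eq hγ (h_rot γ))
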